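/- Let G be a group and let a, b ∈ G satisfy a·b·a = b·a·b and a·b⁻¹·a = b·a⁻¹·b. Then (a·b⁻¹)³ = 1, (a⁻¹·b)³ = 1, and (a·b⁻¹·a⁻¹·b)³ = 1. (Applied with a = σᵢ, b = σᵢ₊₁ in the pseudosymmetric group PSₙ, this shows that the elements pᵢ = σᵢσᵢ₊₁⁻¹, qᵢ = σᵢ⁻¹σᵢ₊₁ satisfy pᵢ³ = qᵢ³ = (pᵢqᵢ)³ = 1.) -/

import Mathlib

/-!
Write `p = a * b⁻¹` and `q = a⁻¹ * b`. The pseudosymmetry relation is a rearrangement of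
`p ^ 3 = 1`. Since `q` is conjugate to `p⁻¹`, and the braid relation says exactly that `p * q` is
the conjugate of `p` by `a`, the elements `q` and `p * q` then have trivial cubes as well.
-/

section

variable {G : Type*} [Group G]

theorem mul_inv_pow_three_eq_one_iff (a b : G) :
    (a * b⁻¹) ^ 3 = 1 ↔ a * b⁻¹ * a = b * a⁻¹ * b := by
  have factorization : (a * b⁻¹) ^ 3 = a * b⁻¹ * a * (b * a⁻¹ * b)⁻¹ := by
    simp only [pow_three, mul_inv_rev, inv_inv, mul_assoc]
  rw [factorization, mul_inv_eq_one]

theorem inv_mul_pow_eq_one_iff (a b : G) (n : ℕ) : (a⁻¹ * b) ^ n = 1 ↔ (a * b⁻¹) ^ n = 1 := by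
  have conjugate : a⁻¹ * b = a⁻¹ * (a * b⁻¹)⁻¹ * a⁻¹⁻¹ := by group
  rw [conjugate, conj_pow, conj_eq_one_iff, inv_pow, inv_eq_one]

theorem mul_inv_mul_inv_mul_eq_conj_iff_braid (a b : G) :
    a * b⁻¹ * a⁻¹ * b = a * (a * b⁻¹) * a⁻¹ ↔ a * b * a = b * a * b := by
  calc
    _ ↔ a * b * a⁻¹ * (a * b⁻¹ * a⁻¹ * b) * (a * b) =
        a * b * a⁻¹ * (a * (a * b⁻¹) * a⁻¹) * (a * b) := by rw [mul_left_inj, mul_right_inj]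
    _ ↔ b * a * b = a * b * a := by group
    _ ↔ a * b * a = b * a * b := eq_comm

end

/-- In any group, if `a` and `b` satisfy the braid relation `a·b·a = b·a·b` and the
pseudosymmetry relation `a·b⁻¹·a = b·a⁻¹·b`, then `(a·b⁻¹)³ = (a⁻¹·b)³ = (a·b⁻¹·a⁻¹·b)³ = 1`. -/
theorem pq_cubes_eq_one {G : Type*} [Group G] (a b : G)
    (hbraid : a * b * a = b * a * b) (hps : a * b⁻¹ * a = b * a⁻¹ * b) :
    (a * b⁻¹) ^ 3 = 1 ∧ (a⁻¹ * b) ^ 3 = 1 ∧ (a * b⁻¹ * a⁻¹ * b) ^ 3 = 1 := by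
  have p_cube : (a * b⁻¹) ^ 3 = 1 := (mul_inv_pow_three_eq_one_iff a b).2 hps
  have q_cube : (a⁻¹ * b) ^ 3 = 1 := (inv_mul_pow_eq_one_iff a b 3).2 p_cube
  have pq_conj_p : a * b⁻¹ * a⁻¹ * b = a * (a * b⁻¹) * a⁻¹ :=
    (mul_inv_mul_inv_mul_eq_conj_iff_braid a b).2 hbraid
  refine ⟨p_cube, q_cube, ?_⟩
  rw [pq_conj_p, conj_pow, conj_eq_one_iff, p_cube]
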